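/- arXiv:2510.18999 — 4 statements merged into one kernel-verified Lean document; each statement's English description precedes it below -/
import Mathlib

section
/- Let L > 0 and let x ∈ ℝ³ satisfy 0 ≤ x_i ≤ L for each coordinate i. Then Σ_{v ∈ {0,1}³} λ_v(x)·‖x − x_v‖² = Σ_{i=1}^3 x_i·(L − x_i). -/
/-- The vertex of the cube `[0,L]³` indexed by `v ∈ {0,1}³`:
`(x_v) i = L` if `v i = 1` and `0` otherwise. -/
noncomputable def cubeVertex (L : ℝ) (v : Fin 3 → Bool) :
    EuclideanSpace ℝ (Fin 3) :=
  (EuclideanSpace.equiv (Fin 3) ℝ).symm fun i => if v i then L else 0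

/-- The trilinear weight of the vertex `v ∈ {0,1}³` of the cube `[0,L]³`
at the point `x`: `λ_v(x) = ∏ i, (x i / L if v i = 1 else (L - x i) / L)`. -/
noncomputable def triWeight (L : ℝ) (v : Fin 3 → Bool)
    (x : EuclideanSpace ℝ (Fin 3)) : ℝ :=
  ∏ i, if v i then x i / L else (L - x i) / L

/-- For a point `x` of the cube `[0,L]³`, the trilinear average of the squared
Euclidean distances to the vertices equals `Σ i, x i * (L - x i)`. -/
theorem triWeight_sum_sq_dist
    (L : ℝ) (hL : 0 < L) (x : EuclideanSpace ℝ (Fin 3))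
    (hx : ∀ i, 0 ≤ x i ∧ x i ≤ L) :
    ∑ v : Fin 3 → Bool, triWeight L v x * ‖x - cubeVertex L v‖ ^ 2 =
      ∑ i, x i * (L - x i) := by
  have hL0 : L ≠ 0 := hL.ne'
  let e : Bool × Bool × Bool ≃ (Fin 3 → Bool) :=
    { toFun := fun p => ![p.1, p.2.1, p.2.2]
      invFun := fun v => (v 0, v 1, v 2)
      left_inv := fun p => rfl
      right_inv := fun v => by
        funext i
        fin_cases i <;> rfl }
  have key : ∀ v : Fin 3 → Bool, triWeight L v x * ‖x - cubeVertex L v‖ ^ 2 =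
      ((if v 0 then x 0 / L else (L - x 0) / L) * (if v 1 then x 1 / L else (L - x 1) / L) *
        (if v 2 then x 2 / L else (L - x 2) / L)) *
      ((x 0 - if v 0 then L else 0) ^ 2 + (x 1 - if v 1 then L else 0) ^ 2 +
        (x 2 - if v 2 then L else 0) ^ 2) := by
    intro v
    rw [EuclideanSpace.real_norm_sq_eq]
    simp only [triWeight, cubeVertex, Fin.prod_univ_three, Fin.sum_univ_three, PiLp.sub_apply]
    rfl
  simp only [key]
  rw [← e.sum_comp]
  simp only [Fintype.sum_prod_type, Fintype.sum_bool, Fin.sum_univ_three]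
  obtain ⟨a, ha⟩ : ∃ a, x 0 = L * a := ⟨x 0 / L, by field_simp⟩
  obtain ⟨b, hb⟩ : ∃ b, x 1 = L * b := ⟨x 1 / L, by field_simp⟩
  obtain ⟨c, hc⟩ : ∃ c, x 2 = L * c := ⟨x 2 / L, by field_simp⟩
  have h1 : ∀ t : ℝ, L * t / L = t := fun t => by field_simp
  have h2 : ∀ t : ℝ, (L - L * t) / L = 1 - t := fun t => by field_simp
  have e0 : ∀ p, e p 0 = p.1 := fun _ => rfl
  have e1 : ∀ p, e p 1 = p.2.1 := fun _ => rfl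
  have e2 : ∀ p, e p 2 = p.2.2 := fun _ => rfl
  simp only [e0, e1, e2, ha, hb, hc, h1, h2, if_true, Bool.false_eq_true, if_false]
  ring
end

section
/- Let L > 0 and let x ∈ ℝ³ satisfy 0 ≤ x_i ≤ L for each coordinate i. Then Σ_{v ∈ {0,1}³} λ_v(x)·‖x − x_v‖ ≤ (√3/2)·L. -/
theorem sum_bool3 (f : (Fin 3 → Bool) → ℝ) :
    ∑ v, f v = ∑ a, ∑ b, ∑ c, f ![a, b, c] := by
  let e : Bool × Bool × Bool ≃ (Fin 3 → Bool) :=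
    { toFun := fun p => ![p.1, p.2.1, p.2.2]
      invFun := fun v => (v 0, v 1, v 2)
      left_inv := fun p => rfl
      right_inv := fun v => by ext i; fin_cases i <;> rfl }
  rw [← e.sum_comp, Fintype.sum_prod_type]
  simp only [Fintype.sum_prod_type]
  rfl

/-- For a point `x` of the cube `[0,L]³`, the trilinear average of the
Euclidean distances to the vertices is at most `(√3/2) * L`. -/
theorem triWeight_sum_dist_le
    (L : ℝ) (hL : 0 < L) (x : EuclideanSpace ℝ (Fin 3))
    (hx : ∀ i, 0 ≤ x i ∧ x i ≤ L) :
    ∑ v : Fin 3 → Bool, triWeight L v x * ‖x - cubeVertex L v‖ ≤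
      Real.sqrt 3 / 2 * L := by
  have hnn : ∀ v, 0 ≤ triWeight L v x := by
    intro v
    refine Finset.prod_nonneg fun i _ => ?_
    have h1 := (hx i).1
    have h2 := sub_nonneg.2 (hx i).2
    split_ifs <;> positivity
  have hs : ∑ v, triWeight L v x = 1 := by
    rw [sum_bool3]
    simp [triWeight, Fin.prod_univ_three]
    field_simp
    ring
  have hq : ∑ v, triWeight L v x * ‖x - cubeVertex L v‖ ^ 2
      = ∑ i, x i * (L - x i) := by
    rw [sum_bool3]
    simp [triWeight, cubeVertex, Fin.prod_univ_three, Fin.sum_univ_three,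
      EuclideanSpace.norm_sq_eq]
    field_simp
    ring
  have h3 : Real.sqrt 3 ^ 2 = 3 := Real.sq_sqrt (by norm_num)
  have hMpos : 0 < Real.sqrt 3 / 2 * L := by positivity
  have hM2 : (Real.sqrt 3 / 2 * L) ^ 2 = 3 / 4 * L ^ 2 := by
    rw [mul_pow, div_pow, h3]; norm_num
  generalize Real.sqrt 3 / 2 * L = M at *
  have hb : ∑ i, x i * (L - x i) ≤ M ^ 2 := by
    rw [hM2, Fin.sum_univ_three]
    nlinarith [sq_nonneg (x 0 - L / 2), sq_nonneg (x 1 - L / 2), sq_nonneg (x 2 - L / 2)]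
  have hm : 2 * M * ∑ v, triWeight L v x * ‖x - cubeVertex L v‖ ≤
      ∑ v, triWeight L v x * ‖x - cubeVertex L v‖ ^ 2 + M ^ 2 * ∑ v, triWeight L v x := by
    rw [Finset.mul_sum, Finset.mul_sum, ← Finset.sum_add_distrib]
    refine Finset.sum_le_sum fun v _ => ?_
    nlinarith [mul_nonneg (hnn v) (sq_nonneg (‖x - cubeVertex L v‖ - M))]
  rw [hs, hq] at hm
  refine le_of_mul_le_mul_left (?_ : 2 * M * _ ≤ 2 * M * M) (by positivity)
  nlinarith
end

section
/- Let L > 0, let Q = [0,L]³ ⊆ ℝ³ be the cube of side length L, and let d : ℝ³ → ℝ be twice continuously differentiable on an open set containing Q with ‖∇²d(z)‖ ≤ M for all z ∈ Q, where M ≥ 0. Define the gradient-augmented trilinear interpolant d_ga(x) = Σ_{v ∈ {0,1}³} λ_v(x)·(d(x_v) + ⟨∇d(x_v), x − x_v⟩). Then for every x ∈ Q, |d_ga(x) − d(x)| ≤ 3·M·L²/8. -/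
open RealInnerProductSpace

lemma taylor_bound_aux {E : Type*} [NormedAddCommGroup E] [NormedSpace ℝ E]
    (Q U : Set E) (hU : IsOpen U) (hQU : Q ⊆ U) (hc : Convex ℝ Q)
    (d : E → ℝ) (hd : ContDiffOn ℝ 2 d U) (M : ℝ)
    (hHess : ∀ z ∈ Q, ‖iteratedFDeriv ℝ 2 d z‖ ≤ M)
    (x y : E) (hx : x ∈ Q) (hy : y ∈ Q) :
    |d y + fderiv ℝ d y (x - y) - d x| ≤ M / 2 * ‖x - y‖ ^ 2 := by
  have hcd : ∀ z ∈ Q, ContDiffAt ℝ 2 d z := fun z hz =>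
    hd.contDiffAt (hU.mem_nhds (hQU hz))
  have hd1 : ∀ z ∈ Q, DifferentiableAt ℝ d z := fun z hz =>
    (hcd z hz).differentiableAt (by norm_num)
  have hd2 : ∀ z ∈ Q, DifferentiableAt ℝ (fderiv ℝ d) z := fun z hz =>
    ((hcd z hz).fderiv_right (m := 1) (by norm_num)).differentiableAt (by norm_num)
  have hn : ∀ z ∈ Q, ‖fderiv ℝ (fderiv ℝ d) z‖ ≤ M := by
    intro z hz
    have h := hHess z hz
    rw [← norm_iteratedFDeriv_fderiv (n := 1), norm_iteratedFDeriv_one] at h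
    exact h
  have hlip : ∀ z ∈ Q, ‖fderiv ℝ d z - fderiv ℝ d y‖ ≤ M * ‖z - y‖ := fun z hz =>
    hc.norm_image_sub_le_of_norm_fderiv_le hd2 hn hy hz
  have hseg : ∀ t ∈ Set.Icc (0 : ℝ) 1, y + t • (x - y) ∈ Q := fun t ht =>
    hc.add_smul_sub_mem hy hx ht
  have hg : ∀ t ∈ Set.Icc (0 : ℝ) 1,
      HasDerivAt (fun t : ℝ => d (y + t • (x - y)) - d y - t * fderiv ℝ d y (x - y))
        (fderiv ℝ d (y + t • (x - y)) (x - y) - fderiv ℝ d y (x - y)) t := by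
    intro t ht
    have h1 : HasDerivAt (fun t : ℝ => y + t • (x - y)) (x - y) t := by
      simpa using ((hasDerivAt_id t).smul_const (x - y)).const_add y
    have h2 := (hd1 _ (hseg t ht)).hasFDerivAt.comp_hasDerivAt t h1
    have h3 := (hasDerivAt_id t).mul_const (fderiv ℝ d y (x - y))
    have h5 := (h2.sub_const (d y)).sub h3
    rw [one_mul] at h5
    exact h5
  have key := image_norm_le_of_norm_deriv_right_le_deriv_boundary
    (f := fun t : ℝ => d (y + t • (x - y)) - d y - t * fderiv ℝ d y (x - y))
    (f' := fun t : ℝ => fderiv ℝ d (y + t • (x - y)) (x - y) - fderiv ℝ d y (x - y))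
    (a := 0) (b := 1) (B := fun t => M / 2 * ‖x - y‖ ^ 2 * t ^ 2)
    (B' := fun t => M / 2 * ‖x - y‖ ^ 2 * (2 * t))
    (fun t ht => (hg t ht).continuousAt.continuousWithinAt)
    (fun t ht => (hg t ⟨ht.1, ht.2.le⟩).hasDerivWithinAt)
    (by simp)
    (fun t => by simpa using (hasDerivAt_pow 2 t).const_mul (M / 2 * ‖x - y‖ ^ 2))
    (by
      intro t ht
      have h := hlip _ (hseg t ⟨ht.1, ht.2.le⟩)
      have h4 := (fderiv ℝ d (y + t • (x - y)) - fderiv ℝ d y).le_of_opNorm_le h (x - y)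
      rw [add_sub_cancel_left, norm_smul, Real.norm_of_nonneg ht.1] at h4
      calc _ ≤ _ := h4
        _ = _ := by ring)
    (Set.right_mem_Icc.2 zero_le_one)
  simp only [one_smul, add_sub_cancel, one_mul, Real.norm_eq_abs, one_pow, mul_one] at key
  rw [abs_sub_comm]
  convert key using 2
  ring

lemma sum_cube (f : (Fin 3 → Bool) → ℝ) :
    ∑ v, f v = ∑ a : Bool, ∑ b : Bool, ∑ c : Bool, f ![a, b, c] := by
  rw [← (Fin.consEquiv (fun _ : Fin 3 => Bool)).sum_comp, Fintype.sum_prod_type]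
  refine Finset.sum_congr rfl fun a _ => ?_
  rw [← (Fin.consEquiv (fun _ : Fin 2 => Bool)).sum_comp, Fintype.sum_prod_type]
  refine Finset.sum_congr rfl fun b _ => ?_
  rw [← (Fin.consEquiv (fun _ : Fin 1 => Bool)).sum_comp, Fintype.sum_prod_type]
  refine Finset.sum_congr rfl fun c _ => ?_
  rw [Fintype.sum_unique]
  congr 1

/-- Error bound for gradient-augmented trilinear interpolation on the cube
`Q = [0,L]³`: if `d` is twice continuously differentiable on an open set
containing `Q` with Hessian operator norm bounded by `M` on `Q`, then the
gradient-augmented interpolant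
`d_ga(x) = Σ_v λ_v(x) * (d(x_v) + ⟨∇d(x_v), x - x_v⟩)` satisfies
`|d_ga(x) - d(x)| ≤ 3ML²/8` for all `x ∈ Q`. -/
theorem gradient_augmented_trilinear_error_bound
    (L : ℝ) (hL : 0 < L)
    (Q : Set (EuclideanSpace ℝ (Fin 3)))
    (hQ : Q = {y : EuclideanSpace ℝ (Fin 3) | ∀ i, y i ∈ Set.Icc (0 : ℝ) L})
    (U : Set (EuclideanSpace ℝ (Fin 3))) (hU : IsOpen U) (hQU : Q ⊆ U)
    (d : EuclideanSpace ℝ (Fin 3) → ℝ)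
    (hd : ContDiffOn ℝ 2 d U)
    (M : ℝ) (hM : 0 ≤ M)
    (hHess : ∀ z ∈ Q, ‖iteratedFDeriv ℝ 2 d z‖ ≤ M)
    (x : EuclideanSpace ℝ (Fin 3)) (hx : x ∈ Q) :
    |(∑ v : Fin 3 → Bool, triWeight L v x *
        (d (cubeVertex L v) + ⟪gradient d (cubeVertex L v), x - cubeVertex L v⟫))
      - d x| ≤ 3 * M * L ^ 2 / 8 := by
  subst hQ
  have hc : Convex ℝ {y : EuclideanSpace ℝ (Fin 3) | ∀ i, y i ∈ Set.Icc (0 : ℝ) L} := by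
    intro a ha b hb s t hs ht hst i
    have := convex_Icc (0 : ℝ) L (ha i) (hb i) hs ht hst
    simpa using this
  have hv : ∀ v, cubeVertex L v ∈
      {y : EuclideanSpace ℝ (Fin 3) | ∀ i, y i ∈ Set.Icc (0 : ℝ) L} := by
    intro v i
    by_cases h : v i <;> simp [cubeVertex, h, hL.le]
  have hgrad : ∀ v, ⟪gradient d (cubeVertex L v), x - cubeVertex L v⟫
      = fderiv ℝ d (cubeVertex L v) (x - cubeVertex L v) := by
    intro v
    simp [gradient]
  have hw : ∀ v, 0 ≤ triWeight L v x := by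
    intro v
    refine Finset.prod_nonneg fun i _ => ?_
    have := hx i
    split_ifs
    · exact div_nonneg this.1 hL.le
    · exact div_nonneg (sub_nonneg.2 this.2) hL.le
  have hL0 : L ≠ 0 := hL.ne'
  have hsum : ∑ v, triWeight L v x = 1 := by
    rw [sum_cube]
    simp [triWeight, Fin.prod_univ_three]
    field_simp
    ring
  have hsq : ∑ v, triWeight L v x * ‖x - cubeVertex L v‖ ^ 2
      = ∑ i, x i * (L - x i) := by
    rw [sum_cube]
    simp [triWeight, Fin.prod_univ_three, Fin.sum_univ_three, EuclideanSpace.norm_sq_eq,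
      cubeVertex]
    field_simp
    ring
  have hle : ∑ i, x i * (L - x i) ≤ 3 * (L ^ 2 / 4) := by
    rw [Fin.sum_univ_three]
    nlinarith [sq_nonneg (x 0 - L / 2), sq_nonneg (x 1 - L / 2), sq_nonneg (x 2 - L / 2)]
  have hrw : (∑ v : Fin 3 → Bool, triWeight L v x *
        (d (cubeVertex L v) + ⟪gradient d (cubeVertex L v), x - cubeVertex L v⟫)) - d x
      = ∑ v : Fin 3 → Bool, triWeight L v x *
        (d (cubeVertex L v) + fderiv ℝ d (cubeVertex L v) (x - cubeVertex L v) - d x) := by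
    simp only [hgrad, mul_sub, Finset.sum_sub_distrib]
    rw [← Finset.sum_mul, hsum, one_mul]
  rw [hrw]
  calc _ ≤ ∑ v : Fin 3 → Bool, |triWeight L v x *
        (d (cubeVertex L v) + fderiv ℝ d (cubeVertex L v) (x - cubeVertex L v) - d x)| :=
        Finset.abs_sum_le_sum_abs _ _
    _ ≤ ∑ v : Fin 3 → Bool, M / 2 * (triWeight L v x * ‖x - cubeVertex L v‖ ^ 2) := by
        refine Finset.sum_le_sum fun v _ => ?_
        rw [abs_mul, abs_of_nonneg (hw v)]
        have := mul_le_mul_of_nonneg_left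
          (taylor_bound_aux _ U hU hQU hc d hd M hHess x _ hx (hv v)) (hw v)
        linarith
    _ = M / 2 * ∑ i, x i * (L - x i) := by rw [← Finset.mul_sum, hsq]
    _ ≤ M / 2 * (3 * (L ^ 2 / 4)) := by gcongr
    _ = _ := by ring
end

section
/- Let L > 0, let Q = [0,L]³ ⊆ ℝ³ be the cube of side length L, and let d : ℝ³ → ℝ be differentiable on an open set containing Q with ‖∇d(z)‖ = 1 for all z ∈ Q (the Eikonal property of a signed distance function). Define the trilinear interpolant d_tl(x) = Σ_{v ∈ {0,1}³} λ_v(x)·d(x_v). Then for every x ∈ Q, |d_tl(x) − d(x)| ≤ (√3/2)·L. -/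
lemma sum_cube_aux (f : (Fin 3 → Bool) → ℝ) :
    ∑ v, f v = f ![true, true, true] + f ![true, true, false] + f ![true, false, true]
      + f ![true, false, false] + f ![false, true, true] + f ![false, true, false]
      + f ![false, false, true] + f ![false, false, false] := by
  have h : (Finset.univ : Finset (Fin 3 → Bool)) = {![true, true, true], ![true, true, false],
      ![true, false, true], ![true, false, false], ![false, true, true], ![false, true, false],
      ![false, false, true], ![false, false, false]} := by decide
  rw [h]
  repeat rw [Finset.sum_insert (by decide)]
  rw [Finset.sum_singleton]
  ring

lemma sum_weight_aux (L : ℝ) (hL : 0 < L) (x : EuclideanSpace ℝ (Fin 3)) :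
    ∑ v, triWeight L v x = 1 := by
  have hL' := hL.ne'
  rw [sum_cube_aux]
  simp only [triWeight, Fin.prod_univ_three]
  simp
  field_simp
  ring

lemma sum_weight_sq_aux (L : ℝ) (hL : 0 < L) (x : EuclideanSpace ℝ (Fin 3)) :
    ∑ v, triWeight L v x * ‖cubeVertex L v - x‖ ^ 2
      = x 0 * (L - x 0) + x 1 * (L - x 1) + x 2 * (L - x 2) := by
  have hL' := hL.ne'
  rw [sum_cube_aux]
  simp only [triWeight, Fin.prod_univ_three, EuclideanSpace.norm_sq_eq, Fin.sum_univ_three,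
    cubeVertex]
  simp
  field_simp
  ring

/-- Error bound for trilinear interpolation of an Eikonal function on the cube
`Q = [0,L]³`: if `d` is differentiable on an open set containing `Q` with
`‖∇d‖ = 1` on `Q`, then the trilinear interpolant
`d_tl(x) = Σ_v λ_v(x) * d(x_v)` satisfies `|d_tl(x) - d(x)| ≤ (√3/2) * L`
for all `x ∈ Q`. -/
theorem trilinear_error_bound_eikonal
    (L : ℝ) (hL : 0 < L)
    (Q : Set (EuclideanSpace ℝ (Fin 3)))
    (hQ : Q = {y : EuclideanSpace ℝ (Fin 3) | ∀ i, y i ∈ Set.Icc (0 : ℝ) L})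
    (U : Set (EuclideanSpace ℝ (Fin 3))) (hU : IsOpen U) (hQU : Q ⊆ U)
    (d : EuclideanSpace ℝ (Fin 3) → ℝ)
    (hd : DifferentiableOn ℝ d U)
    (hEik : ∀ z ∈ Q, ‖gradient d z‖ = 1)
    (x : EuclideanSpace ℝ (Fin 3)) (hx : x ∈ Q) :
    |(∑ v : Fin 3 → Bool, triWeight L v x * d (cubeVertex L v)) - d x| ≤
      Real.sqrt 3 / 2 * L := by
  have hLip : ∀ y ∈ Q, |d y - d x| ≤ ‖y - x‖ := by
    intro y hy
    have hconv : Convex ℝ Q := by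
      rw [hQ]
      intro a ha b hb s t hs ht hst i
      have := (convex_Icc (0 : ℝ) L) (ha i) (hb i) hs ht hst
      simpa using this
    have h := hconv.norm_image_sub_le_of_norm_fderiv_le (𝕜 := ℝ) (f := d) (C := 1)
      (fun z hz => (hd z (hQU hz)).differentiableAt (hU.mem_nhds (hQU hz)))
      (fun z hz => by
        have := hEik z hz
        rw [gradient, LinearIsometryEquiv.norm_map] at this
        exact this.le) hx hy
    simpa using h
  have hxi : ∀ i, x i ∈ Set.Icc (0 : ℝ) L := by
    rw [hQ] at hx
    exact hx
  have hw : ∀ v, 0 ≤ triWeight L v x := by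
    intro v
    refine Finset.prod_nonneg fun i _ => ?_
    obtain ⟨h0, h1⟩ := hxi i
    split_ifs
    · exact div_nonneg h0 hL.le
    · exact div_nonneg (sub_nonneg.2 h1) hL.le
  have hv : ∀ v, cubeVertex L v ∈ Q := by
    intro v
    rw [hQ]
    intro i
    have : cubeVertex L v i = if v i then L else 0 := by simp [cubeVertex]
    rw [this]
    split_ifs <;> simp [hL.le]
  set c : ℝ := Real.sqrt 3 / 2 * L with hc
  have hcpos : 0 < c := by positivity
  have hc2 : c ^ 2 = 3 / 4 * L ^ 2 := by
    rw [hc, mul_pow, div_pow, Real.sq_sqrt (by norm_num)]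
    norm_num
  have h1 := sum_weight_aux L hL x
  have h2 := sum_weight_sq_aux L hL x
  have e : (∑ v, triWeight L v x * d (cubeVertex L v)) - d x
      = ∑ v, triWeight L v x * (d (cubeVertex L v) - d x) := by
    simp only [mul_sub, Finset.sum_sub_distrib, ← Finset.sum_mul, h1, one_mul]
  rw [e]
  calc |∑ v, triWeight L v x * (d (cubeVertex L v) - d x)|
      ≤ ∑ v, |triWeight L v x * (d (cubeVertex L v) - d x)| := Finset.abs_sum_le_sum_abs _ _
    _ ≤ ∑ v, triWeight L v x * ((‖cubeVertex L v - x‖ ^ 2 + c ^ 2) / (2 * c)) := by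
        refine Finset.sum_le_sum fun v _ => ?_
        rw [abs_mul, abs_of_nonneg (hw v)]
        refine mul_le_mul_of_nonneg_left ((hLip _ (hv v)).trans ?_) (hw v)
        rw [le_div_iff₀ (by positivity)]
        nlinarith [sq_nonneg (‖cubeVertex L v - x‖ - c)]
    _ = ((∑ v, triWeight L v x * ‖cubeVertex L v - x‖ ^ 2)
          + (∑ v, triWeight L v x) * c ^ 2) / (2 * c) := by
        rw [Finset.sum_mul, ← Finset.sum_add_distrib, Finset.sum_div]
        refine Finset.sum_congr rfl fun v _ => ?_
        ring
    _ ≤ c := by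
        rw [h1, h2, div_le_iff₀ (by positivity)]
        nlinarith [sq_nonneg (x 0 - L / 2), sq_nonneg (x 1 - L / 2), sq_nonneg (x 2 - L / 2)]
end
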